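/- Let G be a finite simple bipartite graph, let t be a vertex of G that is saturated by every maximum matching of G, and let M be a maximum matching of G containing an edge tw. Then the UIF position obtained by the regular move along tw — namely, the induced subgraph of G on the vertices other than t, with the token on w — is not an N-position. (Hence the player to move in (G, t) wins by moving regularly along an edge of a maximum matching.) -/

import Mathlib

variable {V : Type*}

/-- A matching of `G`: a set of edges of `G`, no two of which share an endpoint. -/
def IsMatching (G : SimpleGraph V) (M : Set (Sym2 V)) : Prop :=
  M ⊆ G.edgeSet ∧ M.Pairwise fun e f => ∀ v : V, v ∈ e → v ∉ f

/-- A maximum matching of `G`: a matching of maximum cardinality among all matchings of `G`. -/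
def IsMaxMatching (G : SimpleGraph V) (M : Set (Sym2 V)) : Prop :=
  IsMatching G M ∧ ∀ N : Set (Sym2 V), IsMatching G N → N.ncard ≤ M.ncard

/-- `M` saturates the vertex `v`: `v` is an endpoint of some edge of `M`. -/
def Saturates (M : Set (Sym2 V)) (v : V) : Prop := ∃ e ∈ M, v ∈ e

/-- N-positions of undirected impartial Geography with free deletion (UIF), played on the
induced subgraph of `G` on the vertex set `A` with the token on `t`: a move consists of
choosing `w ∈ A` adjacent to the token vertex `t` and `u ∈ A` adjacent to `w` (possibly
`u = t`), moving the token to `w` and deleting `u`.  A position is an N-position iff some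
legal move leads to a position that is not an N-position. -/
def uifN [DecidableEq V] (G : SimpleGraph V) : Finset V → V → Prop
  | A, t =>
    ∃ w ∈ A, ∃ u, ∃ _ : u ∈ A, G.Adj t w ∧ G.Adj w u ∧ ¬ uifN G (A.erase u) w
  termination_by A _ => A.card
  decreasing_by exact Finset.card_erase_lt_of_mem ‹u ∈ A›

/-!
In a bipartite graph, the player to move wins exactly when the token is on a vertex saturated by
every maximum matching. From such a vertex `t`, moving regularly along an edge `tw` of a maximum
matching `M` leaves `M \ {tw}` as a maximum matching missing `w`. Conversely, let some maximum
matching miss the token vertex `w`, and let a move go to `x` and delete `u`. By König's theorem,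
minimum vertex covers have as many vertices as maximum matchings have edges, so all their vertices
are saturated by all maximum matchings. Hence they avoid `w`, and so they contain its neighbour `x`.
If deleting `u` does not lower the matching number, a minimum cover of `G` stays minimum in `G - u`;
otherwise a minimum cover of `G - u` together with `u` is a minimum cover of `G`. Either way `G - u`
has a minimum cover containing `x`, so its maximum matchings all saturate `x`.

Vertices are deleted by isolating them, so that all graphs have the same vertex type.
-/

/-- An essential vertex of `G`: one that every maximum matching of `G` saturates. In a
bipartite graph these are the token vertices from which the player to move wins. -/
def IsEssential (G : SimpleGraph V) (v : V) : Prop :=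
  ∀ M : Set (Sym2 V), IsMaxMatching G M → Saturates M v

/-- A minimum vertex cover of `G`: a vertex cover of minimum cardinality, the object dual to a
maximum matching. The cardinality is `Set.ncard`, which is `0` on infinite sets, so the notion is
meant for finite `V`. -/
def IsMinVertexCover (G : SimpleGraph V) (C : Set V) : Prop :=
  G.IsVertexCover C ∧ ∀ D : Set V, G.IsVertexCover D → C.ncard ≤ D.ncard

section Matching

variable {G : SimpleGraph V} {M N : Set (Sym2 V)} {e f : Sym2 V} {t v w : V}

theorem IsMatching.adj (hM : IsMatching G M) (hvw : s(v, w) ∈ M) : G.Adj v w :=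
  hM.1 hvw

theorem IsMatching.eq_of_mem_of_mem (hM : IsMatching G M) (he : e ∈ M) (hf : f ∈ M)
    (hve : v ∈ e) (hvf : v ∈ f) : e = f := by
  by_contra hne
  exact hM.2 he hf hne v hve hvf

theorem IsMatching.mono {G' : SimpleGraph V} (hM : IsMatching G M) (hG : G ≤ G') :
    IsMatching G' M :=
  ⟨hM.1.trans (SimpleGraph.edgeSet_mono hG), hM.2⟩

theorem IsMatching.subset (hM : IsMatching G M) (hNM : N ⊆ M) : IsMatching G N :=
  ⟨hNM.trans hM.1, hM.2.mono hNM⟩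

theorem IsMatching.not_saturates_diff_singleton (hM : IsMatching G M) (he : e ∈ M)
    (hv : v ∈ e) : ¬ Saturates (M \ {e}) v := by
  rintro ⟨f, ⟨hf, hfe⟩, hvf⟩
  exact hfe (hM.eq_of_mem_of_mem hf he hvf hv)

theorem isMatching_deleteIncidenceSet_iff :
    IsMatching (G.deleteIncidenceSet v) M ↔ IsMatching G M ∧ ¬ Saturates M v := by
  simp only [IsMatching, Saturates, SimpleGraph.edgeSet_deleteIncidenceSet,
    Set.subset_def, Set.mem_sdiff, SimpleGraph.incidenceSet, Set.mem_ofPred_eq]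
  grind

theorem isMatching_edgeSet {H : G.Subgraph} (hH : H.IsMatching) : IsMatching G H.edgeSet := by
  refine ⟨H.edgeSet_subset, fun e he f hf hne v hve hvf => hne ?_⟩
  obtain ⟨a, rfl⟩ := hve
  obtain ⟨b, rfl⟩ := hvf
  exact congrArg (s(v, ·)) (hH.eq_of_adj_left he hf)

theorem exists_isMaxMatching [Finite V] (G : SimpleGraph V) : ∃ M, IsMaxMatching G M := by
  have isMatching_empty : IsMatching G ∅ := ⟨Set.empty_subset _, Set.pairwise_empty _⟩
  exact Set.exists_max_image {M | IsMatching G M} Set.ncard (Set.toFinite _) ⟨∅, isMatching_empty⟩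

theorem IsMaxMatching.ncard_lt_of_not_saturates (hM : IsMaxMatching G M) (ht : IsEssential G t)
    (hN : IsMatching G N) (hNt : ¬ Saturates N t) : N.ncard < M.ncard := by
  by_contra! hMN
  exact hNt (ht N ⟨hN, fun K hK => (hM.2 K hK).trans hMN⟩)

theorem IsMaxMatching.isMaxMatching_deleteIncidenceSet [Finite V] (hM : IsMaxMatching G M)
    (ht : IsEssential G t) (htw : s(t, w) ∈ M) :
    IsMaxMatching (G.deleteIncidenceSet t) (M \ {s(t, w)}) := by
  refine ⟨isMatching_deleteIncidenceSet_iff.2 ⟨hM.1.subset Set.sdiff_subset,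
    hM.1.not_saturates_diff_singleton htw (Sym2.mem_mk_left t w)⟩, fun N hN => ?_⟩
  obtain ⟨hNG, hNt⟩ := isMatching_deleteIncidenceSet_iff.1 hN
  have hlt := hM.ncard_lt_of_not_saturates ht hNG hNt
  have hcard := Set.ncard_sdiff_singleton_add_one htw
  lia

theorem IsMaxMatching.not_isEssential_deleteIncidenceSet [Finite V] (hM : IsMaxMatching G M)
    (ht : IsEssential G t) (htw : s(t, w) ∈ M) : ¬ IsEssential (G.deleteIncidenceSet t) w :=
  fun hw => hM.1.not_saturates_diff_singleton htw (Sym2.mem_mk_right t w)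
    (hw _ (hM.isMaxMatching_deleteIncidenceSet ht htw))

end Matching

section VertexCover

variable {G : SimpleGraph V} {M : Set (Sym2 V)} {C S : Set V} {u v w x : V}

theorem isVertexCover_deleteIncidenceSet_iff :
    (G.deleteIncidenceSet v).IsVertexCover C ↔ G.IsVertexCover (insert v C) := by
  simp only [SimpleGraph.IsVertexCover, SimpleGraph.deleteIncidenceSet_adj, Set.mem_insert_iff]
  grind

theorem IsMatching.ncard_le_ncard_of_isVertexCover [Finite V] (hM : IsMatching G M)
    (hC : G.IsVertexCover C) : M.ncard ≤ C.ncard := by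
  rw [Set.ncard_eq_toFinset_card M, Set.ncard_eq_toFinset_card C]
  refine Finset.card_le_card_of_forall_subsingleton (fun e v => v ∈ e) ?_ ?_
  · rintro ⟨a, b⟩ he
    have hab : G.Adj a b := hM.adj (by simpa using he)
    rcases hC hab with ha | hb
    · exact ⟨a, by simpa using ha, Sym2.mem_mk_left a b⟩
    · exact ⟨b, by simpa using hb, Sym2.mem_mk_right a b⟩
  · rintro v - e ⟨he, hve⟩ f ⟨hf, hvf⟩
    exact hM.eq_of_mem_of_mem (by simpa using he) (by simpa using hf) hve hvf

theorem IsMatching.saturates_of_mem_isVertexCover [Finite V] (hM : IsMatching G M)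
    (hC : G.IsVertexCover C) (hCM : C.ncard ≤ M.ncard) (hv : v ∈ C) : Saturates M v := by
  by_contra hMv
  have hcover : (G.deleteIncidenceSet v).IsVertexCover (C \ {v}) :=
    isVertexCover_deleteIncidenceSet_iff.2 (by rwa [Set.insert_sdiff_self_of_mem hv])
  have hle := (isMatching_deleteIncidenceSet_iff.2 ⟨hM, hMv⟩).ncard_le_ncard_of_isVertexCover hcover
  have hlt := Set.ncard_sdiff_singleton_lt_of_mem hv
  lia

theorem IsMatching.mem_isVertexCover_of_adj [Finite V] (hM : IsMatching G M)
    (hC : G.IsVertexCover C) (hCM : C.ncard ≤ M.ncard) (hMw : ¬ Saturates M w)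
    (hwx : G.Adj w x) : x ∈ C :=
  (hC hwx).resolve_left fun hw => hMw (hM.saturates_of_mem_isVertexCover hC hCM hw)

theorem exists_isMinVertexCover [Finite V] (G : SimpleGraph V) : ∃ C, IsMinVertexCover G C :=
  Set.exists_min_image {C | G.IsVertexCover C} Set.ncard (Set.toFinite _)
    ⟨Set.univ, SimpleGraph.isVertexCover_univ⟩

-- Otherwise replacing `S` in `C` by its neighbours outside `C` would give a smaller cover.
theorem IsMinVertexCover.ncard_le_ncard_neighbors_of_isIndepSet [Finite V]
    (hC : IsMinVertexCover G C) (hSC : S ⊆ C) (hS : G.IsIndepSet S) :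
    S.ncard ≤ (⋃ x ∈ S, (G.between C Cᶜ).neighborSet x).ncard := by
  set T := ⋃ x ∈ S, (G.between C Cᶜ).neighborSet x with hT
  have hcover : G.IsVertexCover (C \ S ∪ T) := by
    intro a b hab
    have hnotS : ¬ (a ∈ S ∧ b ∈ S) := fun h => hS h.1 h.2 hab.ne hab
    have hmemC : a ∈ C ∨ b ∈ C := hC.1 hab
    have hba : G.Adj b a := hab.symm
    simp only [hT, Set.mem_union, Set.mem_sdiff, Set.mem_iUnion, SimpleGraph.mem_neighborSet,
      SimpleGraph.between_adj, Set.mem_compl_iff]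
    grind
  have hle := (hC.2 _ hcover).trans (Set.ncard_union_le _ _)
  have hcard := Set.ncard_sdiff_add_ncard_of_subset hSC
  lia

theorem exists_isIndepSet_isIndepSet_compl (hG : G.Colorable 2) :
    ∃ P : Set V, G.IsIndepSet P ∧ G.IsIndepSet Pᶜ := by
  obtain ⟨c⟩ := hG
  refine ⟨{v | c v = 0}, fun a ha b hb _ hab => ?_, fun a ha b hb _ hab => ?_⟩ <;>
  · have := c.valid hab
    simp only [Set.mem_compl_iff, Set.mem_ofPred_eq] at ha hb
    lia

theorem IsMinVertexCover.ncard_le_ncard_neighbors [Finite V] (hG : G.Colorable 2)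
    (hC : IsMinVertexCover G C) (hSC : S ⊆ C) :
    S.ncard ≤ (⋃ x ∈ S, (G.between C Cᶜ).neighborSet x).ncard := by
  obtain ⟨P, hP, hP'⟩ := exists_isIndepSet_isIndepSet_compl hG
  set T : Set V → Set V := fun S => ⋃ x ∈ S, (G.between C Cᶜ).neighborSet x with hT
  have hdisj : Disjoint (T (S ∩ P)) (T (S \ P)) := by
    simp only [hT, Set.disjoint_left, Set.mem_iUnion, SimpleGraph.mem_neighborSet]
    rintro y ⟨a, ha, hay⟩ ⟨b, hb, hby⟩
    by_cases hy : y ∈ P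
    · exact hP ha.2 hy hay.ne hay.1
    · exact hP' hb.2 hy hby.ne hby.1
  calc
    S.ncard = (S ∩ P).ncard + (S \ P).ncard := (Set.ncard_inter_add_ncard_sdiff_eq_ncard S P).symm
    _ ≤ (T (S ∩ P)).ncard + (T (S \ P)).ncard := add_le_add
        (hC.ncard_le_ncard_neighbors_of_isIndepSet (Set.inter_subset_left.trans hSC)
          (hP.mono Set.inter_subset_right))
        (hC.ncard_le_ncard_neighbors_of_isIndepSet (Set.sdiff_subset.trans hSC)
          (hP'.mono fun _ h => h.2))
    _ = (T (S ∩ P) ∪ T (S \ P)).ncard := (Set.ncard_union_eq hdisj).symm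
    _ = (T S).ncard := by rw [← Set.biUnion_union, Set.inter_union_sdiff]

theorem IsMinVertexCover.exists_isMatching_ncard_le [Finite V] (hG : G.Colorable 2)
    (hC : IsMinVertexCover G C) : ∃ M, IsMatching G M ∧ C.ncard ≤ M.ncard := by
  have : (G.between C Cᶜ).LocallyFinite := fun _ => Fintype.ofFinite _
  have hbip : (G.between C Cᶜ).IsBipartiteWith C Cᶜ :=
    SimpleGraph.between_isBipartiteWith disjoint_compl_right
  obtain ⟨H, hCH, hH⟩ := SimpleGraph.exists_isMatching_of_forall_ncard_le hbip
    fun S hSC => hC.ncard_le_ncard_neighbors hG hSC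
  have hbetween : IsMatching (G.between C Cᶜ) H.edgeSet := isMatching_edgeSet hH
  refine ⟨H.edgeSet, hbetween.mono SimpleGraph.between_le, ?_⟩
  rw [Set.ncard_eq_toFinset_card C, Set.ncard_eq_toFinset_card H.edgeSet]
  refine Finset.card_le_card_of_forall_subsingleton (fun v e => v ∈ e) ?_ ?_
  · intro v hv
    obtain ⟨w, hvw, -⟩ := hH (hCH (by simpa using hv))
    exact ⟨s(v, w), by simpa using hvw, Sym2.mem_mk_left v w⟩
  · rintro e he a ⟨ha, hae⟩ b ⟨hb, hbe⟩
    by_contra hab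
    obtain rfl : e = s(a, b) := (Sym2.mem_and_mem_iff hab).1 ⟨hae, hbe⟩
    have hadj := hbetween.adj (by simpa using he)
    exact hbip.disjoint.notMem_of_mem_left (by simpa using hb)
      (hbip.mem_of_mem_adj (by simpa using ha) hadj)

theorem IsMaxMatching.exists_isVertexCover_ncard_eq [Finite V] (hG : G.Colorable 2)
    (hM : IsMaxMatching G M) : ∃ C, G.IsVertexCover C ∧ C.ncard = M.ncard := by
  obtain ⟨C, hC⟩ := exists_isMinVertexCover G
  obtain ⟨N, hN, hCN⟩ := hC.exists_isMatching_ncard_le hG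
  exact ⟨C, hC.1, (hCN.trans (hM.2 N hN)).antisymm (hM.1.ncard_le_ncard_of_isVertexCover hC.1)⟩

theorem isEssential_deleteIncidenceSet_of_adj [Finite V] (hG : G.Colorable 2)
    (hw : ¬ IsEssential G w) (hwx : G.Adj w x) (hxu : G.Adj x u) :
    IsEssential (G.deleteIncidenceSet u) x := by
  intro K hK
  obtain ⟨N, hN, hNw⟩ : ∃ N, IsMaxMatching G N ∧ ¬ Saturates N w := by
    simpa only [IsEssential, not_forall, exists_prop] using hw
  suffices ∃ C, (G.deleteIncidenceSet u).IsVertexCover C ∧ C.ncard ≤ K.ncard ∧ x ∈ C by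
    obtain ⟨C, hC, hCK, hxC⟩ := this
    exact hK.1.saturates_of_mem_isVertexCover hC hCK hxC
  rcases le_or_gt N.ncard K.ncard with hNK | hKN
  · obtain ⟨C, hC, hCN⟩ := hN.exists_isVertexCover_ncard_eq hG
    exact ⟨C, hC.mono (G.deleteIncidenceSet_le u), hCN.trans_le hNK,
      hN.1.mem_isVertexCover_of_adj hC hCN.le hNw hwx⟩
  · obtain ⟨C, hC, hCK⟩ :=
      hK.exists_isVertexCover_ncard_eq (hG.mono_left (G.deleteIncidenceSet_le u))
    have hCN : (insert u C).ncard ≤ N.ncard := by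
      have := Set.ncard_insert_le u C
      lia
    have hxC : x ∈ insert u C :=
      hN.1.mem_isVertexCover_of_adj (isVertexCover_deleteIncidenceSet_iff.1 hC) hCN hNw hwx
    exact ⟨C, hC, hCK.le, hxC.resolve_left hxu.ne⟩

end VertexCover

section Game

variable {G : SimpleGraph V} {A : Finset V} {s : Set V} {t v w : V}

theorem spanningCoe_induce_adj :
    (G.induce s).spanningCoe.Adj v w ↔ G.Adj v w ∧ v ∈ s ∧ w ∈ s := by
  simp

variable [DecidableEq V]

theorem spanningCoe_induce_erase (G : SimpleGraph V) (A : Finset V) (u : V) :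
    (G.induce (A.erase u : Set V)).spanningCoe =
      (G.induce (A : Set V)).spanningCoe.deleteIncidenceSet u := by
  ext v w
  simp only [spanningCoe_induce_adj, SimpleGraph.deleteIncidenceSet_adj, Finset.mem_coe,
    Finset.mem_erase]
  tauto

theorem uifN_iff_isEssential [Finite V] (hG : G.Colorable 2) (ht : t ∈ A) :
    uifN G A t ↔ IsEssential (G.induce (A : Set V)).spanningCoe t := by
  induction A using Finset.strongInduction generalizing t with
  | H A ih =>
  rw [uifN]
  constructor
  · rintro ⟨w, hw, u, hu, htw, hwu, hlose⟩
    by_contra hinessential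
    refine hlose ((ih _ (Finset.erase_ssubset hu) (Finset.mem_erase.2 ⟨hwu.ne, hw⟩)).2 ?_)
    rw [spanningCoe_induce_erase]
    exact isEssential_deleteIncidenceSet_of_adj (hG.mono_left (G.spanningCoe_induce_le A))
      hinessential (spanningCoe_induce_adj.2 ⟨htw, ht, hw⟩) (spanningCoe_induce_adj.2 ⟨hwu, hw, hu⟩)
  · intro hessential
    obtain ⟨M, hM⟩ := exists_isMaxMatching (G.induce (A : Set V)).spanningCoe
    obtain ⟨_, htwM, w, rfl⟩ := hessential M hM
    obtain ⟨htw, -, hw⟩ := spanningCoe_induce_adj.1 (hM.1.adj htwM)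
    refine ⟨w, hw, t, ht, htw, htw.symm, ?_⟩
    rw [ih _ (Finset.erase_ssubset ht) (Finset.mem_erase.2 ⟨htw.ne', hw⟩),
      spanningCoe_induce_erase]
    exact hM.not_isEssential_deleteIncidenceSet hessential htwM

end Game

/-- If `G` is bipartite, `t` is saturated by every maximum matching of `G`, and `M` is a
maximum matching of `G` containing the edge `tw`, then the UIF position reached by the
regular move along `tw` (deleting `t`, token on `w`) is not an N-position. -/
theorem uif_regular_move_along_maxMatching_wins
    {V : Type*} [Fintype V] [DecidableEq V] (G : SimpleGraph V) (hG : G.Colorable 2)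
    (t w : V) (ht : ∀ M : Set (Sym2 V), IsMaxMatching G M → Saturates M t)
    (M : Set (Sym2 V)) (hM : IsMaxMatching G M) (htw : s(t, w) ∈ M) :
    ¬ uifN G (Finset.univ.erase t) w := by
  rw [uifN_iff_isEssential hG (by simpa using (hM.1.adj htw).ne'),
    spanningCoe_induce_erase, Finset.coe_univ, SimpleGraph.spanningCoe_induce_univ]
  exact hM.not_isEssential_deleteIncidenceSet ht htw
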